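/- Identity Principle for v-slice regular functions: Let Ω ⊂ ℍ be an axially symmetric slice domain, v ∈ ℍ, and f ∈ 𝒮ℛ_v(Ω). If there exists i ∈ 𝕊² such that the zero set Z_f ∩ Ω_i has an accumulation point in Ω_i, then f ≡ 0 on Ω. -/

import Mathlib

open Quaternion

noncomputable section

/-- Real Euclidean inner product on the quaternions (sum of products of components). -/
def qinner (q v : ℍ[ℝ]) : ℝ :=
  q.re * v.re + q.imI * v.imI + q.imJ * v.imJ + q.imK * v.imK

/-- The sphere of purely imaginary unit quaternions. -/
def Sph2 : Set ℍ[ℝ] := {i | i.re = 0 ∧ ‖i‖ = 1}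

/-- The complex slice plane `ℂ(i) = {x + y i : x, y ∈ ℝ}`. -/
def slicePlane (i : ℍ[ℝ]) : Set ℍ[ℝ] := {z | ∃ x y : ℝ, z = (x : ℍ[ℝ]) + y • i}

/-- The slice Cauchy–Riemann operator `∂/∂ z̄_i = (1/2)(∂/∂x + i ∂/∂y)`. -/
def dbar (i : ℍ[ℝ]) (f : ℍ[ℝ] → ℍ[ℝ]) (q : ℍ[ℝ]) : ℍ[ℝ] :=
  (1 / 2 : ℝ) • (fderiv ℝ f q 1 + i * fderiv ℝ f q i)

/-- Slice regular functions on `Ω`. -/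
def SliceRegularOn (f : ℍ[ℝ] → ℍ[ℝ]) (Ω : Set ℍ[ℝ]) : Prop :=
  ContDiffOn ℝ 1 f Ω ∧ ∀ i ∈ Sph2, ∀ q ∈ Ω ∩ slicePlane i, dbar i f q = 0

/-- `v`-slice regular functions on `Ω`. -/
def VSliceRegularOn (v : ℍ[ℝ]) (f : ℍ[ℝ] → ℍ[ℝ]) (Ω : Set ℍ[ℝ]) : Prop :=
  ContDiffOn ℝ 1 f Ω ∧ ∀ i ∈ Sph2, ∀ q ∈ Ω ∩ slicePlane i,
    dbar i f q + (1 / 4 : ℝ) • ((v - i * v * i) * f q) = 0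

/-- Axially symmetric slice domain. -/
def AxSymSliceDomain (Ω : Set ℍ[ℝ]) : Prop :=
  IsOpen Ω ∧ IsConnected Ω ∧ (∃ r : ℝ, (r : ℍ[ℝ]) ∈ Ω) ∧
  (∀ i ∈ Sph2, IsConnected (Ω ∩ slicePlane i)) ∧
  (∀ (x y : ℝ), ∀ i ∈ Sph2, (x : ℍ[ℝ]) + y • i ∈ Ω → ∀ j ∈ Sph2, (x : ℍ[ℝ]) + y • j ∈ Ω)

/-!
For an imaginary unit `i` one has `v - i v i = 2 (⟨1, v⟩ + ⟨i, v⟩ i)`, so the zeroth-order term of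
the `v`-slice equation is the logarithmic derivative of `q ↦ exp ⟨q, v⟩`: multiplying a `v`-slice
regular function by this nowhere vanishing real factor makes it slice regular, with the same zeros.

On each slice `ℂ(i)`, a slice regular function is holomorphic with values in `ℍ`, viewed as a
complex vector space through left multiplication by `i`. By the one-variable identity principle it
vanishes on the slice containing the accumulation point, hence at the real points of `Ω`, which
belong to all slices; the same principle then gives its vanishing on every other slice.
-/

open Filter Set Topology

section General

lemma accPt_preimage_of_isEmbedding {X Y : Type*} [TopologicalSpace X] [TopologicalSpace Y]
    {e : X → Y} (he : IsEmbedding e) {s : Set Y} (hs : s ⊆ range e) {x : X}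
    (h : AccPt (e x) (𝓟 s)) : AccPt x (𝓟 (e ⁻¹' s)) := by
  have himage : e '' (e ⁻¹' s \ {x}) = s \ {e x} := by
    rw [image_sdiff he.injective, image_preimage_eq_of_subset hs, image_singleton]
  rw [accPt_principal_iff_nhdsWithin] at h ⊢
  rwa [← map_neBot_iff e, he.map_nhdsWithin_eq, himage]

lemma accPt_inter_range_of_injective {X Y : Type*} [TopologicalSpace X] [PerfectSpace X]
    [TopologicalSpace Y] {e : X → Y} (he : Function.Injective e) {x : X} (hcont : ContinuousAt e x)
    {U : Set Y} (hU : U ∈ 𝓝 (e x)) : AccPt (e x) (𝓟 (U ∩ range e)) := by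
  have hacc : AccPt x (𝓟 (e ⁻¹' U)) := by
    simpa only [inter_univ] using
      (PerfectSpace.univ_preperfect x (mem_univ x)).nhds_inter (hcont hU)
  rw [← image_preimage_eq_inter_range, ← map_principal]
  exact hacc.map hcont he

-- Mathlib's Cauchy-Riemann criterion fixes the real structure of `E` to be the one induced by its
-- complex structure; here any compatible real structure is allowed.
lemma differentiableAt_complex_of_hasFDerivAt_real {E : Type*} [NormedAddCommGroup E]
    [NormedSpace ℝ E] [NormedSpace ℂ E] [IsScalarTower ℝ ℂ E] {h : ℂ → E} {h' : ℂ →L[ℝ] E} {z : ℂ}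
    (hh : HasFDerivAt h h' z) (hCR : h' Complex.I = Complex.I • h' 1) : DifferentiableAt ℂ h z := by
  have hbasis (w : ℂ) : w = w.re • (1 : ℂ) + w.im • Complex.I := by simp
  refine (hasFDerivAt_of_restrictScalars ℝ (f' := .toSpanSingleton ℂ (h' 1)) hh ?_).differentiableAt
  ext w
  calc w • h' 1 = (w.re • (1 : ℂ) + w.im • Complex.I) • h' 1 := by rw [← hbasis]
    _ = w.re • h' 1 + w.im • h' Complex.I := by rw [add_smul, smul_assoc, smul_assoc, one_smul, hCR]
    _ = h' w := by rw [← map_smul, ← map_smul, ← map_add, ← hbasis]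

end General

section SlicePlane

variable {i : ℍ[ℝ]}

lemma mul_self_of_mem_Sph2 (hi : i ∈ Sph2) : i * i = -1 := by
  have hstar : star i = -i := Quaternion.star_eq_neg.mpr hi.1
  have hnorm : i * star i = 1 := by
    rw [Quaternion.self_mul_star, Quaternion.normSq_eq_norm_mul_self, hi.2, mul_one,
      Quaternion.coe_one]
  rw [← hnorm, hstar, mul_neg, neg_neg]

/-- The embedding `x + y I ↦ x + y i` of the complex numbers onto the slice plane `ℂ(i)`. It depends
on a proof that `i` is an imaginary unit, which is what makes it multiplicative. -/
def sliceHom (hi : i ∈ Sph2) : ℂ →ₐ[ℝ] ℍ[ℝ] :=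
  Complex.liftAux i (mul_self_of_mem_Sph2 hi)

lemma sliceHom_apply (hi : i ∈ Sph2) (z : ℂ) : sliceHom hi z = (z.re : ℍ[ℝ]) + z.im • i := rfl

lemma sliceHom_I (hi : i ∈ Sph2) : sliceHom hi Complex.I = i :=
  Complex.liftAux_apply_I i (mul_self_of_mem_Sph2 hi)

lemma norm_sliceHom (hi : i ∈ Sph2) (z : ℂ) : ‖sliceHom hi z‖ = ‖z‖ := by
  have horth : inner ℝ (z.re : ℍ[ℝ]) (z.im • i) = 0 := by
    simp [Quaternion.inner_def, hi.1]
  rw [← sq_eq_sq₀ (norm_nonneg _) (norm_nonneg _), sliceHom_apply, sq, sq,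
    norm_add_sq_eq_norm_sq_add_norm_sq_real horth, Quaternion.norm_coe, norm_smul, hi.2, mul_one,
    Real.norm_eq_abs, Real.norm_eq_abs, abs_mul_abs_self, abs_mul_abs_self,
    Complex.norm_mul_self_eq_normSq, Complex.normSq_apply]

lemma isEmbedding_sliceHom (hi : i ∈ Sph2) : IsEmbedding (sliceHom hi) :=
  (AddMonoidHomClass.isometry_of_norm _ (norm_sliceHom hi)).isEmbedding

lemma range_sliceHom (hi : i ∈ Sph2) : range (sliceHom hi) = slicePlane i := by
  ext q
  constructor
  · rintro ⟨z, rfl⟩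
    exact ⟨z.re, z.im, sliceHom_apply hi z⟩
  · rintro ⟨x, y, rfl⟩
    exact ⟨⟨x, y⟩, sliceHom_apply hi _⟩

lemma coe_mem_slicePlane (i : ℍ[ℝ]) (r : ℝ) : (r : ℍ[ℝ]) ∈ slicePlane i :=
  ⟨r, 0, by simp⟩

lemma Sph2_nonempty : Sph2.Nonempty := by
  have hnorm : ‖(Complex.I : ℍ[ℝ])‖ * ‖(Complex.I : ℍ[ℝ])‖ = 1 * 1 := by
    rw [← Quaternion.normSq_eq_norm_mul_self, Quaternion.normSq_def']
    simp
  exact ⟨Complex.I, rfl, (mul_self_inj (norm_nonneg _) zero_le_one).mp hnorm⟩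

lemma exists_mem_Sph2_mem_slicePlane (q : ℍ[ℝ]) : ∃ j ∈ Sph2, q ∈ slicePlane j := by
  obtain him | him := eq_or_ne q.im 0
  · obtain ⟨j, hj⟩ := Sph2_nonempty
    exact ⟨j, hj, q.re, 0, by rw [zero_smul, ← him, Quaternion.re_add_im]⟩
  · have hnorm : ‖q.im‖ ≠ 0 := norm_ne_zero_iff.mpr him
    refine ⟨‖q.im‖⁻¹ • q.im, ⟨by simp, ?_⟩, q.re, ‖q.im‖, ?_⟩
    · rw [norm_smul, norm_inv, norm_norm, inv_mul_cancel₀ hnorm]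
    · rw [smul_inv_smul₀ hnorm, Quaternion.re_add_im]

/-- The quaternions as a complex normed space, with `I` acting as left multiplication by `i`. Since
it depends on `i`, it is not an instance. -/
abbrev sliceNormedSpace (hi : i ∈ Sph2) : NormedSpace ℂ ℍ[ℝ] where
  __ := Module.compHom ℍ[ℝ] (sliceHom hi).toRingHom
  norm_smul_le z q := by
    change ‖sliceHom hi z * q‖ ≤ ‖z‖ * ‖q‖
    rw [norm_mul, norm_sliceHom]

end SlicePlane

section IdentityPrinciple

variable {Ω : Set ℍ[ℝ]} {g : ℍ[ℝ] → ℍ[ℝ]} {i : ℍ[ℝ]}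

lemma cauchyRiemann_of_dbar_eq_zero (hi : i ∈ Sph2) {q : ℍ[ℝ]} (h : dbar i g q = 0) :
    fderiv ℝ g q i = i * fderiv ℝ g q 1 := by
  have hsum : fderiv ℝ g q 1 + i * fderiv ℝ g q i = 0 :=
    (smul_eq_zero_iff_right (by norm_num)).mp h
  rw [eq_neg_of_add_eq_zero_left hsum, mul_neg, ← mul_assoc, mul_self_of_mem_Sph2 hi, neg_one_mul,
    neg_neg]

lemma SliceRegularOn.differentiableOn_comp_sliceHom (hg : SliceRegularOn g Ω) (hΩ : IsOpen Ω)
    (hi : i ∈ Sph2) :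
    letI := sliceNormedSpace hi
    DifferentiableOn ℂ (g ∘ sliceHom hi) (sliceHom hi ⁻¹' Ω) := by
  let := sliceNormedSpace hi
  have : IsScalarTower ℝ ℂ ℍ[ℝ] := ⟨fun r z q => by
    change sliceHom hi (r • z) * q = r • (sliceHom hi z * q)
    rw [map_smul, smul_mul_assoc]⟩
  intro z hz
  have hgz : HasFDerivAt g (fderiv ℝ g (sliceHom hi z)) (sliceHom hi z) :=
    ((hg.1.contDiffAt (hΩ.mem_nhds hz)).differentiableAt one_ne_zero).hasFDerivAt
  have hCR := cauchyRiemann_of_dbar_eq_zero hi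
    (hg.2 i hi _ ⟨hz, range_sliceHom hi ▸ mem_range_self z⟩)
  refine (differentiableAt_complex_of_hasFDerivAt_real
    (hgz.comp z (sliceHom hi).toLinearMap.toContinuousLinearMap.hasFDerivAt)
    ?_).differentiableWithinAt
  change fderiv ℝ g (sliceHom hi z) (sliceHom hi Complex.I) =
    sliceHom hi Complex.I * fderiv ℝ g (sliceHom hi z) (sliceHom hi 1)
  rw [sliceHom_I, map_one, hCR]

lemma SliceRegularOn.eqOn_zero_slice (hg : SliceRegularOn g Ω) (hΩ : IsOpen Ω) (hi : i ∈ Sph2)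
    (hconn : IsPreconnected (Ω ∩ slicePlane i)) {p : ℍ[ℝ]} (hp : p ∈ Ω ∩ slicePlane i)
    (hacc : AccPt p (𝓟 ({q ∈ Ω | g q = 0} ∩ slicePlane i))) :
    EqOn g 0 (Ω ∩ slicePlane i) := by
  let := sliceNormedSpace hi
  rw [← range_sliceHom hi] at hconn hp hacc ⊢
  obtain ⟨hpΩ, z, rfl⟩ := hp
  have hpre : IsPreconnected (sliceHom hi ⁻¹' Ω) := by
    rwa [← (isEmbedding_sliceHom hi).isInducing.isPreconnected_image,
      image_preimage_eq_inter_range]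
  have hzeros : ∃ᶠ w in 𝓝[≠] z, (g ∘ sliceHom hi) w = 0 :=
    (accPt_iff_frequently_nhdsNE.mp
      (accPt_preimage_of_isEmbedding (isEmbedding_sliceHom hi) inter_subset_right hacc)).mono
      fun _ hw => hw.1.2
  have hanalytic : AnalyticOnNhd ℂ (g ∘ sliceHom hi) (sliceHom hi ⁻¹' Ω) :=
    (hg.differentiableOn_comp_sliceHom hΩ hi).analyticOnNhd
      (hΩ.preimage (isEmbedding_sliceHom hi).continuous)
  rintro _ ⟨hwΩ, w, rfl⟩
  exact hanalytic.eqOn_zero_of_preconnected_of_frequently_eq_zero hpre hpΩ hzeros hwΩ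

theorem SliceRegularOn.eqOn_zero_of_accPt (hg : SliceRegularOn g Ω) (hΩ : IsOpen Ω)
    (hreal : ∃ r : ℝ, (r : ℍ[ℝ]) ∈ Ω) (hconn : ∀ j ∈ Sph2, IsPreconnected (Ω ∩ slicePlane j))
    (hi : i ∈ Sph2) {p : ℍ[ℝ]} (hp : p ∈ Ω ∩ slicePlane i)
    (hacc : AccPt p (𝓟 ({q ∈ Ω | g q = 0} ∩ slicePlane i))) :
    EqOn g 0 Ω := by
  obtain ⟨r, hr⟩ := hreal
  have hslice : EqOn g 0 (Ω ∩ slicePlane i) := hg.eqOn_zero_slice hΩ hi (hconn i hi) hp hacc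
  intro q hq
  obtain ⟨j, hj, hqj⟩ := exists_mem_Sph2_mem_slicePlane q
  refine hg.eqOn_zero_slice hΩ hj (hconn j hj) ⟨hr, coe_mem_slicePlane j r⟩ ?_ ⟨hq, hqj⟩
  refine (accPt_inter_range_of_injective Quaternion.coe_injective
    Quaternion.continuous_coe.continuousAt (hΩ.mem_nhds hr)).mono (principal_mono.mpr ?_)
  rintro _ ⟨htΩ, t, rfl⟩
  exact ⟨⟨htΩ, hslice ⟨htΩ, coe_mem_slicePlane i t⟩⟩, coe_mem_slicePlane j t⟩

end IdentityPrinciple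

section Exponential

variable {Ω : Set ℍ[ℝ]} {v : ℍ[ℝ]} {f : ℍ[ℝ] → ℍ[ℝ]} {i : ℍ[ℝ]}

lemma qinner_eq_inner_swap (q v : ℍ[ℝ]) : qinner q v = inner ℝ v q := by
  simp only [qinner, Quaternion.inner_def, Quaternion.re_mul, Quaternion.re_star,
    Quaternion.imI_star, Quaternion.imJ_star, Quaternion.imK_star, mul_neg, sub_neg_eq_add]
  ring

lemma mul_add_mul_eq_qinner (hi : i.re = 0) (v : ℍ[ℝ]) :
    i * v + v * i = (2 : ℝ) • (qinner 1 v • i - qinner i v • 1) := by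
  ext <;> simp [qinner, hi] <;> ring

lemma sub_mul_mul_eq_qinner (hi : i ∈ Sph2) (v : ℍ[ℝ]) :
    v - i * v * i = (2 : ℝ) • (qinner 1 v • 1 + qinner i v • i) := by
  have hsq := mul_self_of_mem_Sph2 hi
  calc v - i * v * i = -(i * (i * v + v * i)) := by
        rw [mul_add, ← mul_assoc, ← mul_assoc, hsq]
        noncomm_ring
    _ = (2 : ℝ) • (qinner 1 v • 1 + qinner i v • i) := by
        rw [mul_add_mul_eq_qinner hi.1, mul_smul_comm, mul_sub, mul_smul_comm, mul_smul_comm, hsq,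
          mul_one]
        module

lemma dbar_smul {φ : ℍ[ℝ] → ℝ} {q : ℍ[ℝ]} (hφ : DifferentiableAt ℝ φ q)
    (hf : DifferentiableAt ℝ f q) (i : ℍ[ℝ]) :
    dbar i (fun x => φ x • f x) q =
      φ q • dbar i f q + (1 / 2 : ℝ) • (fderiv ℝ φ q 1 • f q + fderiv ℝ φ q i • (i * f q)) := by
  have hderiv (w : ℍ[ℝ]) : fderiv ℝ (fun x => φ x • f x) q w =
      φ q • fderiv ℝ f q w + fderiv ℝ φ q w • f q := by
    rw [fderiv_fun_smul hφ hf]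
    rfl
  rw [dbar, dbar, hderiv, hderiv, mul_add, mul_smul_comm, mul_smul_comm]
  module

lemma hasFDerivAt_exp_qinner (v q : ℍ[ℝ]) :
    HasFDerivAt (fun x => Real.exp (qinner x v)) (Real.exp (qinner q v) • innerSL ℝ v) q := by
  simp only [qinner_eq_inner_swap]
  exact (innerSL ℝ v).hasFDerivAt.exp

lemma dbar_exp_qinner_smul (hi : i ∈ Sph2) (v : ℍ[ℝ]) {q : ℍ[ℝ]} (hf : DifferentiableAt ℝ f q) :
    dbar i (fun x => Real.exp (qinner x v) • f x) q =
      Real.exp (qinner q v) • (dbar i f q + (1 / 4 : ℝ) • ((v - i * v * i) * f q)) := by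
  have hexp := hasFDerivAt_exp_qinner v q
  have hderiv (w : ℍ[ℝ]) : fderiv ℝ (fun x => Real.exp (qinner x v)) q w =
      Real.exp (qinner q v) * qinner w v := by
    rw [hexp.fderiv, qinner_eq_inner_swap w]
    rfl
  rw [dbar_smul hexp.differentiableAt hf, hderiv, hderiv, sub_mul_mul_eq_qinner hi,
    smul_mul_assoc, add_mul, smul_mul_assoc, smul_mul_assoc, one_mul]
  module

lemma VSliceRegularOn.sliceRegularOn_exp_smul (hf : VSliceRegularOn v f Ω) (hΩ : IsOpen Ω) :
    SliceRegularOn (fun q => Real.exp (qinner q v) • f q) Ω := by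
  refine ⟨?_, fun i hi q hq => ?_⟩
  · simp only [qinner_eq_inner_swap]
    exact ((innerSL ℝ v).contDiff.exp.contDiffOn).smul hf.1
  · have hfq := (hf.1.contDiffAt (hΩ.mem_nhds hq.1)).differentiableAt one_ne_zero
    rw [dbar_exp_qinner_smul hi v hfq, hf.2 i hi q hq, smul_zero]

end Exponential

theorem stmt12_general {Ω : Set ℍ[ℝ]} (hΩ : IsOpen Ω) (hreal : ∃ r : ℝ, (r : ℍ[ℝ]) ∈ Ω)
    (hconn : ∀ j ∈ Sph2, IsPreconnected (Ω ∩ slicePlane j)) {v : ℍ[ℝ]} {f : ℍ[ℝ] → ℍ[ℝ]}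
    (hf : VSliceRegularOn v f Ω) {i : ℍ[ℝ]} (hi : i ∈ Sph2) {p : ℍ[ℝ]}
    (hp : p ∈ Ω ∩ slicePlane i)
    (hacc : AccPt p (𝓟 ({q ∈ Ω | f q = 0} ∩ slicePlane i))) :
    EqOn f 0 Ω := by
  have hzero (q : ℍ[ℝ]) : Real.exp (qinner q v) • f q = 0 ↔ f q = 0 :=
    smul_eq_zero_iff_right (Real.exp_ne_zero _)
  simp only [← hzero] at hacc
  intro q hq
  exact (hzero q).mp
    ((hf.sliceRegularOn_exp_smul hΩ).eqOn_zero_of_accPt hΩ hreal hconn hi hp hacc hq)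

/-- Identity Principle for `v`-slice regular functions: if the zero set
of `f` restricted to some slice `Ω_i` has an accumulation point in `Ω_i`, then `f ≡ 0`. -/
theorem stmt12 (Ω : Set ℍ[ℝ]) (hΩ : AxSymSliceDomain Ω) (v : ℍ[ℝ])
    (f : ℍ[ℝ] → ℍ[ℝ]) (hf : VSliceRegularOn v f Ω)
    (i : ℍ[ℝ]) (hi : i ∈ Sph2) (p : ℍ[ℝ]) (hp : p ∈ Ω ∩ slicePlane i)
    (hacc : AccPt p (Filter.principal ({q ∈ Ω | f q = 0} ∩ slicePlane i))) :
    ∀ q ∈ Ω, f q = 0 := by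
  obtain ⟨hopen, -, hreal, hconn, -⟩ := hΩ
  exact stmt12_general hopen hreal (fun j hj => (hconn j hj).isPreconnected) hf hi hp hacc
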